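/- arXiv:1007.1178 — 2 statements merged into one kernel-verified Lean document; each statement's English description precedes it below -/
import Mathlib

section
/- If G is a finite simple graph with T(G) isomorphic to the 7-sun S₇, then G has exactly 14 edges and G contains no subgraph isomorphic to the n-wheel W_n for any n with 4 ≤ n ≤ 6. -/
open SimpleGraph

/-- The triangular line graph `T(G)` of a graph `G`: vertices are the edges of `G`,
with two edges adjacent iff they share an endpoint and lie in a common triangle. -/
def TriLine {V : Type*} (G : SimpleGraph V) : SimpleGraph G.edgeSet where
  Adj e₁ e₂ := ∃ u v w : V, G.Adj u v ∧ G.Adj v w ∧ G.Adj u w ∧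
      (e₁ : Sym2 V) = s(u, v) ∧ (e₂ : Sym2 V) = s(v, w)
  symm := by
    refine ⟨?_⟩
    rintro e₁ e₂ ⟨u, v, w, huv, hvw, huw, h₁, h₂⟩
    exact ⟨w, v, u, hvw.symm, huv.symm, huw.symm, by rw [h₂]; exact Sym2.eq_swap,
      by rw [h₁]; exact Sym2.eq_swap⟩
  loopless := by
    refine ⟨?_⟩
    rintro e ⟨u, v, w, huv, hvw, huw, h₁, h₂⟩
    rw [h₁, Sym2.eq_iff] at h₂
    rcases h₂ with ⟨h, _⟩ | ⟨h, _⟩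
    · exact huv.ne h
    · exact huw.ne h

/-- `H` is a triangular line graph: it is isomorphic to `T(G)` for some finite graph `G`. -/
def IsTriLineGraph {W : Type*} (H : SimpleGraph W) : Prop :=
  ∃ (V : Type) (_ : Fintype V) (G : SimpleGraph V), Nonempty (TriLine G ≃g H)

/-- Given a preimage `G` of `H` (via the isomorphism `f : T(G) ≃g H`) and a set `S` of
vertices of `H`, this is the subgraph of `G` consisting of the edges of `G` corresponding
to the vertices in `S` (together with their endpoints); i.e. `T⁻¹(S)`. -/
def edgePre {V W : Type*} (G : SimpleGraph V) {H : SimpleGraph W}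
    (f : TriLine G ≃g H) (S : Set W) : G.Subgraph where
  verts := {v | ∃ (u : V) (e : G.edgeSet), (e : Sym2 V) = s(v, u) ∧ (f e : W) ∈ S}
  Adj a b := G.Adj a b ∧ ∃ e : G.edgeSet, (e : Sym2 V) = s(a, b) ∧ (f e : W) ∈ S
  adj_sub h := h.1
  edge_vert := by
    rintro a b ⟨h, e, he, hS⟩
    exact ⟨b, e, he, hS⟩
  symm := by
    refine ⟨?_⟩
    rintro a b ⟨h, e, he, hS⟩
    exact ⟨h.symm, e, he.trans Sym2.eq_swap, hS⟩

/-- `A` occurs as a (not necessarily induced) subgraph of `B`. -/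
def HasSubgraphIso {α β : Type*} (A : SimpleGraph α) (B : SimpleGraph β) : Prop :=
  ∃ f : α → β, Function.Injective f ∧ ∀ a b, A.Adj a b → B.Adj (f a) (f b)

/-- Glue a graph along an identification relation `R`: the quotient graph on
the quotient of the vertex set by the equivalence generated by `R`. -/
def Glue {ι : Type*} (G : SimpleGraph ι) (R : ι → ι → Prop) :
    SimpleGraph (Quotient (Relation.EqvGen.setoid R)) :=
  SimpleGraph.fromRel (fun x y => ∃ a b : ι, G.Adj a b ∧ x = Quotient.mk _ a ∧ y = Quotient.mk _ b)

/-- The `k`-wheel: a `k`-cycle plus a dominating center vertex (`none`). -/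
def wheelGraph (k : ℕ) : SimpleGraph (Option (ZMod k)) :=
  SimpleGraph.fromRel (fun a b =>
    (∃ i : ZMod k, a = some i ∧ b = some (i + 1)) ∨ (a = none ∧ b ≠ none))

/-- The squared `k`-cycle: a `k`-cycle plus edges between vertices at distance two. -/
def squaredCycleGraph (k : ℕ) : SimpleGraph (ZMod k) :=
  SimpleGraph.fromRel (fun i j => j = i + 1 ∨ j = i + 2)

/-- The `k`-sun: a `k`-cycle (the `Sum.inl` vertices), with a new vertex (`Sum.inr i`)
for each cycle edge `{i, i+1}`, adjacent to both its endpoints. -/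
def sunGraph (k : ℕ) : SimpleGraph (ZMod k ⊕ ZMod k) :=
  SimpleGraph.fromRel (fun a b => ∃ i : ZMod k,
    (a = Sum.inl i ∧ b = Sum.inl (i + 1)) ∨
    (a = Sum.inr i ∧ b = Sum.inl i) ∨
    (a = Sum.inr i ∧ b = Sum.inl (i + 1)))

def sunNbr : ZMod 7 ⊕ ZMod 7 → List (ZMod 7 ⊕ ZMod 7)
  | Sum.inl i => [Sum.inl (i + 1), Sum.inl (i - 1), Sum.inr i, Sum.inr (i - 1)]
  | Sum.inr i => [Sum.inl i, Sum.inl (i + 1)]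

instance sunMemDec (a : ZMod 7 ⊕ ZMod 7) (l : List (ZMod 7 ⊕ ZMod 7)) : Decidable (a ∈ l) :=
  decidable_of_iff (∃ x ∈ l, x = a) (by simp)

set_option maxRecDepth 100000 in
set_option synthInstance.maxSize 100000 in
set_option synthInstance.maxHeartbeats 1000000 in
theorem sunNbr_of_adj : ∀ a b, (sunGraph 7).Adj a b → b ∈ sunNbr a := by
  simp only [sunGraph, SimpleGraph.fromRel_adj]
  decide +kernel

set_option maxRecDepth 100000 in
set_option synthInstance.maxSize 100000 in
set_option synthInstance.maxHeartbeats 1000000 in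
theorem no_c4 : ∀ a, ∀ b ∈ sunNbr a, ∀ c ∈ sunNbr b, c ≠ a → ∀ d ∈ sunNbr c, d ≠ b →
    a ∉ sunNbr d := by
  decide +kernel

set_option maxRecDepth 100000 in
set_option synthInstance.maxSize 100000 in
set_option synthInstance.maxHeartbeats 1000000 in
theorem no_c5 : ∀ a, ∀ b ∈ sunNbr a, ∀ c ∈ sunNbr b, c ≠ a → ∀ d ∈ sunNbr c, d ≠ b → d ≠ a →
    ∀ e ∈ sunNbr d, e ≠ c → e ≠ b → a ∉ sunNbr e := by
  decide +kernel

set_option maxRecDepth 100000 in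
set_option synthInstance.maxSize 100000 in
set_option synthInstance.maxHeartbeats 1000000 in
theorem no_c6 : ∀ a, ∀ b ∈ sunNbr a, ∀ c ∈ sunNbr b, c ≠ a → ∀ d ∈ sunNbr c, d ≠ b → d ≠ a →
    ∀ e ∈ sunNbr d, e ≠ c → e ≠ b → e ≠ a → ∀ f ∈ sunNbr e, f ≠ d → f ≠ c → f ≠ b →
    a ∉ sunNbr f := by
  decide +kernel

theorem wheel_cycle {V : Type} (G : SimpleGraph V) (F : TriLine G ≃g sunGraph 7) (n : ℕ)
    (hn : ∀ i : ZMod n, i ≠ i + 1) (hw : HasSubgraphIso (wheelGraph n) G) :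
    ∃ g : ZMod n → ZMod 7 ⊕ ZMod 7, Function.Injective g ∧ ∀ i, g (i + 1) ∈ sunNbr (g i) := by
  obtain ⟨φ, hinj, hadj⟩ := hw
  have hs : ∀ i : ZMod n, G.Adj (φ none) (φ (some i)) := fun i =>
    hadj _ _ (by simp [wheelGraph])
  have hr : ∀ i : ZMod n, G.Adj (φ (some i)) (φ (some (i + 1))) := fun i =>
    hadj _ _ (by
      rw [wheelGraph, SimpleGraph.fromRel_adj]
      exact ⟨fun h => hn i (Option.some.inj h), Or.inl (Or.inl ⟨i, rfl, rfl⟩)⟩)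
  refine ⟨fun i => F ⟨s(φ none, φ (some i)), hs i⟩, ?_, ?_⟩
  · intro i j hij
    have h1 := congrArg Subtype.val (F.injective hij)
    simp only [Sym2.eq_iff] at h1
    rcases h1 with ⟨_, h⟩ | ⟨h, _⟩
    · exact Option.some.inj (hinj h)
    · exact absurd (hinj h) (by simp)
  · intro i
    apply sunNbr_of_adj
    rw [F.map_adj_iff]
    exact ⟨φ (some i), φ none, φ (some (i + 1)), (hs i).symm, hs (i + 1), hr i,
      Sym2.eq_swap, rfl⟩

/-- A preimage of the 7-sun has exactly 14 edges and contains no `n`-wheel with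
`4 ≤ n ≤ 6` as a subgraph. -/
theorem preimage_of_sevenSun_card_edges {V : Type} [Fintype V] (G : SimpleGraph V)
    (h : Nonempty (TriLine G ≃g sunGraph 7)) :
    Nat.card G.edgeSet = 14 ∧
      ∀ n : ℕ, 4 ≤ n → n ≤ 6 → ¬ HasSubgraphIso (wheelGraph n) G := by
  obtain ⟨F⟩ := h
  refine ⟨?_, ?_⟩
  · rw [Nat.card_congr F.toEquiv]
    simp
  · intro n h4 h6 hw
    interval_cases n
    · obtain ⟨g, hg, ha⟩ := wheel_cycle G F 4 (by decide) hw
      exact no_c4 (g 0) (g 1) (ha 0) (g 2) (ha 1) (hg.ne (by decide)) (g 3) (ha 2)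
        (hg.ne (by decide)) (ha 3)
    · obtain ⟨g, hg, ha⟩ := wheel_cycle G F 5 (by decide) hw
      exact no_c5 (g 0) (g 1) (ha 0) (g 2) (ha 1) (hg.ne (by decide)) (g 3) (ha 2)
        (hg.ne (by decide)) (hg.ne (by decide)) (g 4) (ha 3)
        (hg.ne (by decide)) (hg.ne (by decide)) (ha 4)
    · obtain ⟨g, hg, ha⟩ := wheel_cycle G F 6 (by decide) hw
      exact no_c6 (g 0) (g 1) (ha 0) (g 2) (ha 1) (hg.ne (by decide)) (g 3) (ha 2)
        (hg.ne (by decide)) (hg.ne (by decide)) (g 4) (ha 3)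
        (hg.ne (by decide)) (hg.ne (by decide)) (hg.ne (by decide)) (g 5) (ha 4)
        (hg.ne (by decide)) (hg.ne (by decide)) (hg.ne (by decide)) (ha 5)
end

section
/- Let φ be a Boolean formula in conjunctive normal form with clauses of size three, and let G_φ be the graph constructed from φ by forming a variable cluster (with a wire of length 2m+1) for each variable and combining these clusters via the clause gadgets for the clauses. Then every edge of G_φ lies in exactly one triangle of G_φ. -/
open SimpleGraph

/-- Vertex type of a 7-sun: `Sum.inl i` are the cycle vertices `cᵢ`, and `Sum.inr i` is
the degree-two vertex `pᵢ` attached to the cycle edge `{cᵢ, cᵢ₊₁}`. -/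
abbrev SunV : Type := ZMod 7 ⊕ ZMod 7

/-- Vertex type of the binary-enforced `k`-sun: cycle vertices `vᵢ` (`inl i`), sun
pendant vertices `pᵢ` (`inr (inl i)`), new cycle vertices `x_{i,t}`
(`inr (inr (inl (i, t)))`) and new pendant vertices `q_{i,t}` (`inr (inr (inr (i, t)))`). -/
abbrev BSV (k : ℕ) : Type := ZMod k ⊕ ZMod k ⊕ (ZMod k × Fin 2) ⊕ (ZMod k × Fin 3)

/-- The binary-enforced `k`-sun `S_k^b`: a `k`-sun together with, for each `i`, a
sequence of three triangles between `v_{i+4}` and `v_i`, forming a 7-sun together with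
the four consecutive sun triangles from `v_i` to `v_{i+4}`. -/
def binarySun (k : ℕ) : SimpleGraph (BSV k) :=
  SimpleGraph.fromRel (fun a b => ∃ i : ZMod k,
    (a = Sum.inl i ∧ b = Sum.inl (i + 1)) ∨
    (a = Sum.inr (Sum.inl i) ∧ (b = Sum.inl i ∨ b = Sum.inl (i + 1))) ∨
    (a = Sum.inl (i + 4) ∧ b = Sum.inr (Sum.inr (Sum.inl (i, 0)))) ∨
    (a = Sum.inr (Sum.inr (Sum.inl (i, 0))) ∧ b = Sum.inr (Sum.inr (Sum.inl (i, 1)))) ∨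
    (a = Sum.inr (Sum.inr (Sum.inl (i, 1))) ∧ b = Sum.inl i) ∨
    (a = Sum.inr (Sum.inr (Sum.inr (i, 0))) ∧
      (b = Sum.inl (i + 4) ∨ b = Sum.inr (Sum.inr (Sum.inl (i, 0))))) ∨
    (a = Sum.inr (Sum.inr (Sum.inr (i, 1))) ∧
      (b = Sum.inr (Sum.inr (Sum.inl (i, 0))) ∨ b = Sum.inr (Sum.inr (Sum.inl (i, 1))))) ∨
    (a = Sum.inr (Sum.inr (Sum.inr (i, 2))) ∧
      (b = Sum.inr (Sum.inr (Sum.inl (i, 1))) ∨ b = Sum.inl i)))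

/-- Vertex type of a variable cluster: the wire suns `H_x = H_{x,0}, H_{x,1}, …,
H_{x,2m}` (`inl`), and the large variable gadgets (binary-enforced 12-suns)
`V_{x,1}, …, V_{x,2m}` (`inr`, where index `j : Fin (2m)` stands for `V_{x,j+1}`). -/
abbrev ClusterV (m : ℕ) : Type := (Fin (2 * m + 1) × SunV) ⊕ (Fin (2 * m) × BSV 12)

/-- Disjoint union of the wire 7-suns and the binary-enforced 12-suns. -/
def clusterBase (m : ℕ) : SimpleGraph (ClusterV m) :=
  SimpleGraph.fromRel (fun a b =>
    (∃ (i : Fin (2 * m + 1)) (x y : SunV), (sunGraph 7).Adj x y ∧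
      a = Sum.inl (i, x) ∧ b = Sum.inl (i, y)) ∨
    (∃ (j : Fin (2 * m)) (x y : BSV 12), (binarySun 12).Adj x y ∧
      a = Sum.inr (j, x) ∧ b = Sum.inr (j, y)))

/-- The identifications of a variable cluster: (1) the wire NOT gadgets joining the ROOT
bowtie of `H_{x,i+1}` to `H_{x,i}`, and (2) for each `j`, the EQUAL gadget joining the
EQUAL bowtie `{c₂,c₃,c₄,p₂,p₃}` (center `c₃`) of `H_{x,j+1}` to the bowtie
`{x_{0,0}, x_{0,1}, v₀, q_{0,1}, q_{0,2}}` (center `x_{0,1}`) of the labeled 7-sun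
`H'_{x,j+1}` of the binary-enforced 12-sun `V_{x,j+1}`. -/
def clusterRel (m : ℕ) : ClusterV m → ClusterV m → Prop := fun x y =>
  (∃ i : Fin (2 * m),
    (x = Sum.inl (i.castSucc, Sum.inl 5) ∧ y = Sum.inl (i.succ, Sum.inl 1)) ∨
    (x = Sum.inl (i.castSucc, Sum.inl 4) ∧ y = Sum.inl (i.succ, Sum.inl 0)) ∨
    (x = Sum.inl (i.castSucc, Sum.inr 4) ∧ y = Sum.inl (i.succ, Sum.inr 0)) ∨
    (x = Sum.inl (i.castSucc, Sum.inr 5) ∧ y = Sum.inl (i.succ, Sum.inl 2)) ∨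
    (x = Sum.inl (i.castSucc, Sum.inl 6) ∧ y = Sum.inl (i.succ, Sum.inr 1))) ∨
  (∃ j : Fin (2 * m),
    (x = Sum.inl (j.succ, Sum.inl 3) ∧
      y = Sum.inr (j, Sum.inr (Sum.inr (Sum.inl (0, 1))))) ∨
    (x = Sum.inl (j.succ, Sum.inl 2) ∧
      y = Sum.inr (j, Sum.inr (Sum.inr (Sum.inr (0, 1))))) ∨
    (x = Sum.inl (j.succ, Sum.inr 2) ∧
      y = Sum.inr (j, Sum.inr (Sum.inr (Sum.inl (0, 0))))) ∨
    (x = Sum.inl (j.succ, Sum.inl 4) ∧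
      y = Sum.inr (j, Sum.inr (Sum.inr (Sum.inr (0, 2))))) ∨
    (x = Sum.inl (j.succ, Sum.inr 3) ∧ y = Sum.inr (j, Sum.inl 0)))

/-- The variable cluster: the wire of `2m+1` 7-suns with the `2m` large variable gadgets
attached via EQUAL gadgets. -/
def clusterGraph (m : ℕ) : SimpleGraph (Quotient (Relation.EqvGen.setoid (clusterRel m))) :=
  Glue (clusterBase m) (clusterRel m)

/-- The vertices of the cluster coming from the wire 7-sun `H_{x,i}`. -/
def clusterWireVerts (m : ℕ) (i : Fin (2 * m + 1)) :
    Set (Quotient (Relation.EqvGen.setoid (clusterRel m))) :=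
  Set.range (fun v : SunV => Quotient.mk _ (Sum.inl (i, v)))

/-- The vertices of the cluster coming from the large variable gadget `V_{x,j+1}`. -/
def clusterGadgetVerts (m : ℕ) (j : Fin (2 * m)) :
    Set (Quotient (Relation.EqvGen.setoid (clusterRel m))) :=
  Set.range (fun v : BSV 12 => Quotient.mk _ (Sum.inr (j, v)))


/-- A 3-CNF formula: `m` clauses, each a triple of literals, where a literal is a
variable index together with a polarity (`true` = positive, `false` = negated). -/
def ClauseFun (n m : ℕ) : Type := Fin m → Fin 3 → Fin n × Bool

/-- The formula is satisfiable: some truth assignment makes a literal of every clause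
true. -/
def Satisfiable {n m : ℕ} (φ : ClauseFun n m) : Prop :=
  ∃ σ : Fin n → Bool, ∀ j : Fin m, ∃ l : Fin 3, σ (φ j l).1 = (φ j l).2

/-- The index (in `Fin (2m)`, standing for labels `1, …, 2m`) of the large variable
gadget used by clause `j` for a literal of polarity `b`: label `2(j+1)` for a positive
literal and `2(j+1) - 1` for a negated one. -/
def gadgetIdx (m : ℕ) (j : Fin m) (b : Bool) : Fin (2 * m) :=
  ⟨2 * (j : ℕ) + (if b then 1 else 0), by have := j.isLt; split <;> omega⟩

/-- `n` disjoint variable clusters, one for each variable. -/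
def phiBase (n m : ℕ) : SimpleGraph (Fin n × ClusterV m) :=
  SimpleGraph.fromRel (fun a b => a.1 = b.1 ∧ (clusterBase m).Adj a.2 b.2)

/-- All identifications of `G_φ`: the internal identifications of each variable cluster,
together with, for each clause `j`, the clause-gadget identifications joining the three
12-suns of the large variable gadgets `V_{x_{i_ℓ}, k_ℓ}`: in each such 12-sun take the
triangles `⟨a₁, a₂, a₃⟩ = ⟨v₁, v₂, p₁⟩` and `⟨b₁, b₂, b₃⟩ = ⟨v₇, v₈, p₇⟩` at maximum
distance and identify `a_{ℓ,1} = b_{ℓ+1,1}`, `a_{ℓ,2} = b_{ℓ+1,3}`,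
`a_{ℓ,3} = b_{ℓ+1,2}` with subscripts mod 3. -/
def phiRel (n m : ℕ) (φ : ClauseFun n m) :
    (Fin n × ClusterV m) → (Fin n × ClusterV m) → Prop := fun x y =>
  (∃ (i : Fin n) (a b : ClusterV m), clusterRel m a b ∧ x = (i, a) ∧ y = (i, b)) ∨
  (∃ (j : Fin m) (l : Fin 3),
    (x = ((φ j l).1, Sum.inr (gadgetIdx m j (φ j l).2, Sum.inl 1)) ∧
      y = ((φ j (l + 1)).1,
        Sum.inr (gadgetIdx m j (φ j (l + 1)).2, Sum.inl 7))) ∨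
    (x = ((φ j l).1, Sum.inr (gadgetIdx m j (φ j l).2, Sum.inl 2)) ∧
      y = ((φ j (l + 1)).1,
        Sum.inr (gadgetIdx m j (φ j (l + 1)).2, Sum.inr (Sum.inl 7)))) ∨
    (x = ((φ j l).1, Sum.inr (gadgetIdx m j (φ j l).2, Sum.inr (Sum.inl 1))) ∧
      y = ((φ j (l + 1)).1,
        Sum.inr (gadgetIdx m j (φ j (l + 1)).2, Sum.inl 8))))

/-- The graph `G_φ` of the reduction: one variable cluster per variable, combined via
the clause gadgets of the `m` clauses. -/
def Gphi (n m : ℕ) (φ : ClauseFun n m) :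
    SimpleGraph (Quotient (Relation.EqvGen.setoid (phiRel n m φ))) :=
  Glue (phiBase n m) (phiRel n m φ)

/-! ### Local structure -/

abbrev LV : Type := SunV ⊕ BSV 12

instance decSunV : DecidableEq SunV := fun a b => instDecidableEqSum a b
instance decBSV : DecidableEq (BSV 12) := fun a b => instDecidableEqSum a b
instance decLV : DecidableEq LV := @instDecidableEqSum _ _ decSunV decBSV
def memDec {α : Type} [DecidableEq α] (a : α) : (l : List α) → Decidable (a ∈ l)
  | [] => isFalse (by simp)
  | b :: l =>
    if h : a = b then isTrue (by simp [h])
    else match memDec a l with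
      | isTrue h' => isTrue (by simp [h'])
      | isFalse h' => isFalse (by simp [h, h'])
instance memS (a : SunV) (l : List SunV) : Decidable (a ∈ l) := memDec a l
instance memB (a : BSV 12) (l : List (BSV 12)) : Decidable (a ∈ l) := memDec a l
instance memL (a : LV) (l : List LV) : Decidable (a ∈ l) := memDec a l

def nbS : SunV → List SunV
  | Sum.inl i => [Sum.inl (i + 1), Sum.inl (i - 1), Sum.inr i, Sum.inr (i - 1)]
  | Sum.inr i => [Sum.inl i, Sum.inl (i + 1)]

def nbB : BSV 12 → List (BSV 12)
  | Sum.inl i => [Sum.inl (i + 1), Sum.inl (i - 1), Sum.inr (Sum.inl i),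
      Sum.inr (Sum.inl (i - 1)), Sum.inr (Sum.inr (Sum.inl (i - 4, 0))),
      Sum.inr (Sum.inr (Sum.inl (i, 1))), Sum.inr (Sum.inr (Sum.inr (i - 4, 0))),
      Sum.inr (Sum.inr (Sum.inr (i, 2)))]
  | Sum.inr (Sum.inl i) => [Sum.inl i, Sum.inl (i + 1)]
  | Sum.inr (Sum.inr (Sum.inl (i, 0))) => [Sum.inl (i + 4), Sum.inr (Sum.inr (Sum.inl (i, 1))),
      Sum.inr (Sum.inr (Sum.inr (i, 0))), Sum.inr (Sum.inr (Sum.inr (i, 1)))]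
  | Sum.inr (Sum.inr (Sum.inl (i, 1))) => [Sum.inl i, Sum.inr (Sum.inr (Sum.inl (i, 0))),
      Sum.inr (Sum.inr (Sum.inr (i, 1))), Sum.inr (Sum.inr (Sum.inr (i, 2)))]
  | Sum.inr (Sum.inr (Sum.inr (i, 0))) => [Sum.inl (i + 4), Sum.inr (Sum.inr (Sum.inl (i, 0)))]
  | Sum.inr (Sum.inr (Sum.inr (i, 1))) => [Sum.inr (Sum.inr (Sum.inl (i, 0))),
      Sum.inr (Sum.inr (Sum.inl (i, 1)))]
  | Sum.inr (Sum.inr (Sum.inr (i, 2))) => [Sum.inr (Sum.inr (Sum.inl (i, 1))), Sum.inl i]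

def nbL : LV → List LV
  | Sum.inl a => (nbS a).map Sum.inl
  | Sum.inr a => (nbB a).map Sum.inr

def adjL (u w : LV) : Prop := w ∈ nbL u

instance : DecidableRel adjL := fun u w => inferInstanceAs (Decidable (w ∈ nbL u))

theorem nbS_symm : ∀ u : SunV, ∀ w ∈ nbS u, u ∈ nbS w := by decide +kernel
theorem nbB_symm : ∀ u : BSV 12, ∀ w ∈ nbB u, u ∈ nbB w := by decide +kernel
theorem nbS_ne : ∀ u : SunV, u ∉ nbS u := by decide +kernel
theorem nbB_ne : ∀ u : BSV 12, u ∉ nbB u := by decide +kernel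

theorem sun_adj_iff (u w : SunV) : (sunGraph 7).Adj u w ↔ w ∈ nbS u := by
  constructor
  · intro h
    simp only [sunGraph, SimpleGraph.fromRel_adj] at h
    obtain ⟨-, ⟨i, h⟩ | ⟨i, h⟩⟩ := h
    · rcases h with ⟨rfl, rfl⟩ | ⟨rfl, rfl⟩ | ⟨rfl, rfl⟩ <;> simp [nbS]
    · apply nbS_symm
      rcases h with ⟨rfl, rfl⟩ | ⟨rfl, rfl⟩ | ⟨rfl, rfl⟩ <;> simp [nbS]
  · intro h
    have hne : u ≠ w := by rintro rfl; exact nbS_ne _ h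
    simp only [sunGraph, SimpleGraph.fromRel_adj]
    refine ⟨hne, ?_⟩
    rcases u with i | i
    · simp only [nbS, List.mem_cons, List.not_mem_nil, or_false] at h
      rcases h with rfl | rfl | rfl | rfl
      · left; exact ⟨i, by simp⟩
      · right; exact ⟨i - 1, by simp⟩
      · right; exact ⟨i, by simp⟩
      · right; exact ⟨i - 1, by simp⟩
    · simp only [nbS, List.mem_cons, List.not_mem_nil, or_false] at h
      rcases h with rfl | rfl <;> left <;> exact ⟨i, by simp⟩

theorem bin_adj_iff (u w : BSV 12) : (binarySun 12).Adj u w ↔ w ∈ nbB u := by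
  constructor
  · intro h
    simp only [binarySun, SimpleGraph.fromRel_adj] at h
    obtain ⟨-, ⟨i, h⟩ | ⟨i, h⟩⟩ := h
    · rcases h with ⟨rfl, rfl⟩ | ⟨rfl, rfl | rfl⟩ | ⟨rfl, rfl⟩ | ⟨rfl, rfl⟩ | ⟨rfl, rfl⟩ |
        ⟨rfl, rfl | rfl⟩ | ⟨rfl, rfl | rfl⟩ | ⟨rfl, rfl | rfl⟩ <;> simp [nbB]
    · apply nbB_symm
      rcases h with ⟨rfl, rfl⟩ | ⟨rfl, rfl | rfl⟩ | ⟨rfl, rfl⟩ | ⟨rfl, rfl⟩ | ⟨rfl, rfl⟩ |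
        ⟨rfl, rfl | rfl⟩ | ⟨rfl, rfl | rfl⟩ | ⟨rfl, rfl | rfl⟩ <;> simp [nbB]
  · intro h
    have hne : u ≠ w := by rintro rfl; exact nbB_ne _ h
    simp only [binarySun, SimpleGraph.fromRel_adj]
    refine ⟨hne, ?_⟩
    rcases u with i | i | ⟨i, t⟩ | ⟨i, t⟩
    · simp only [nbB, List.mem_cons, List.not_mem_nil, or_false] at h
      rcases h with rfl | rfl | rfl | rfl | rfl | rfl | rfl | rfl
      · left; exact ⟨i, by simp⟩
      · right; exact ⟨i - 1, by simp⟩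
      · right; exact ⟨i, by simp⟩
      · right; exact ⟨i - 1, by simp⟩
      · left; exact ⟨i - 4, by simp⟩
      · right; exact ⟨i, by simp⟩
      · right; exact ⟨i - 4, by simp⟩
      · right; exact ⟨i, by simp⟩
    · simp only [nbB, List.mem_cons, List.not_mem_nil, or_false] at h
      rcases h with rfl | rfl <;> left <;> exact ⟨i, by simp⟩
    · fin_cases t
      · simp only [nbB, List.mem_cons, List.not_mem_nil, or_false] at h
        rcases h with rfl | rfl | rfl | rfl
        · right; exact ⟨i, by simp⟩
        · left; exact ⟨i, by simp⟩
        · right; exact ⟨i, by simp⟩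
        · right; exact ⟨i, by simp⟩
      · simp only [nbB, List.mem_cons, List.not_mem_nil, or_false] at h
        rcases h with rfl | rfl | rfl | rfl
        · left; exact ⟨i, by simp⟩
        · right; exact ⟨i, by simp⟩
        · right; exact ⟨i, by simp⟩
        · right; exact ⟨i, by simp⟩
    · fin_cases t <;> simp only [nbB, List.mem_cons, List.not_mem_nil, or_false] at h <;>
        rcases h with rfl | rfl <;> left <;> exact ⟨i, by simp⟩

theorem baseS_ex : ∀ u : SunV, ∀ w ∈ nbS u, ∃ z ∈ nbS u, z ∈ nbS w := by decide +kernel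
theorem baseB_ex : ∀ u : BSV 12, ∀ w ∈ nbB u, ∃ z ∈ nbB u, z ∈ nbB w := by decide +kernel
theorem base_uniq : ∀ u : LV, ∀ w ∈ nbL u, ∀ z ∈ nbL u, z ∈ nbL w →
    ∀ z' ∈ nbL u, z' ∈ nbL w → z = z' := by decide +kernel
theorem adjL_symm_aux : ∀ u : LV, ∀ w ∈ nbL u, u ∈ nbL w := by
  rintro (u | u) w h
  · obtain ⟨w, hw, rfl⟩ := List.mem_map.1 h
    exact List.mem_map_of_mem (nbS_symm u w hw)
  · obtain ⟨w, hw, rfl⟩ := List.mem_map.1 h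
    exact List.mem_map_of_mem (nbB_symm u w hw)
theorem adjL_symm {u w : LV} (h : adjL u w) : adjL w u := adjL_symm_aux u w h
theorem adjL_ne_aux : ∀ u : LV, ¬ adjL u u := by decide +kernel

/-! ### Links between pieces -/

inductive Kind
  | wire (t t' : Bool) (d : ℤ)
  | cn
  | cp
  deriving DecidableEq

def Kind.rev : Kind → Kind
  | .wire t t' d => .wire t' t (-d)
  | .cn => .cp
  | .cp => .cn

structure LinkE where
  k : Kind
  s : LV
  t : LV
  deriving DecidableEq

def LinkE.rev (e : LinkE) : LinkE := ⟨e.k.rev, e.t, e.s⟩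

def hC (i : ZMod 7) : LV := Sum.inl (Sum.inl i)
def hP (i : ZMod 7) : LV := Sum.inl (Sum.inr i)
def bV (i : ZMod 12) : LV := Sum.inr (Sum.inl i)
def bP (i : ZMod 12) : LV := Sum.inr (Sum.inr (Sum.inl i))
def bX (t : Fin 2) : LV := Sum.inr (Sum.inr (Sum.inr (Sum.inl (0, t))))
def bQ (t : Fin 3) : LV := Sum.inr (Sum.inr (Sum.inr (Sum.inr (0, t))))

def LF : List LinkE :=
  [⟨.wire false false 1, hC 5, hC 1⟩, ⟨.wire false false 1, hC 4, hC 0⟩,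
   ⟨.wire false false 1, hP 4, hP 0⟩, ⟨.wire false false 1, hP 5, hC 2⟩,
   ⟨.wire false false 1, hC 6, hP 1⟩,
   ⟨.wire false true 0, hC 3, bX 1⟩, ⟨.wire false true 0, hC 2, bQ 1⟩,
   ⟨.wire false true 0, hP 2, bX 0⟩, ⟨.wire false true 0, hC 4, bQ 2⟩,
   ⟨.wire false true 0, hP 3, bV 0⟩,
   ⟨.wire false true (-1), hC 0, bQ 2⟩, ⟨.wire false true 1, hP 5, bQ 1⟩,
   ⟨.cn, bV 1, bV 7⟩, ⟨.cn, bV 2, bP 7⟩, ⟨.cn, bP 1, bV 8⟩]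

def LL : List LinkE := LF ++ LF.map LinkE.rev

def Kind.comp : Kind → Kind → Option Kind
  | .wire t t' d, .wire s s' d' => if t' = s then some (.wire t s' (d + d')) else none
  | _, _ => none

def Kind.nz : Kind → Kind → Kind → Prop
  | .wire _ _ d, .wire _ _ d', .wire _ _ d'' => d + d' + d'' ≠ 0
  | _, _, _ => False

instance : ∀ a b c, Decidable (Kind.nz a b c)
  | .wire _ _ d, .wire _ _ d', .wire _ _ d'' => inferInstanceAs (Decidable (d + d' + d'' ≠ 0))
  | .cn, _, _ => inferInstanceAs (Decidable False)
  | .cp, _, _ => inferInstanceAs (Decidable False)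
  | .wire _ _ _, .cn, _ => inferInstanceAs (Decidable False)
  | .wire _ _ _, .cp, _ => inferInstanceAs (Decidable False)
  | .wire _ _ _, .wire _ _ _, .cn => inferInstanceAs (Decidable False)
  | .wire _ _ _, .wire _ _ _, .cp => inferInstanceAs (Decidable False)

theorem LL_rev : ∀ e ∈ LL, e.rev ∈ LL := by decide +kernel

theorem LL_trans : ∀ e ∈ LL, ∀ f ∈ LL, e.t = f.s →
    (f.k = e.k.rev ∧ e.s = f.t) ∨ ∃ g ∈ LL, e.k.comp f.k = some g.k ∧ g.s = e.s ∧ g.t = f.t := by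
  decide +kernel

theorem LL_F2 : ∀ e ∈ LL, ∀ f ∈ LL, e.k = f.k → adjL e.s f.s →
    adjL e.t f.t ∧ ∃ g ∈ LL, g.k = e.k ∧ adjL e.s g.s ∧ adjL f.s g.s := by
  decide +kernel

theorem LL_inj : ∀ e ∈ LL, ∀ f ∈ LL, e.k = f.k → e.s = f.s → e.t = f.t := by
  decide +kernel

theorem LL_F3 : ∀ e ∈ LL, ∀ f ∈ LL, adjL e.t f.s → ∀ g ∈ LL, adjL g.t e.s → adjL f.t g.s →
    Kind.nz e.k f.k g.k ∨ (∃ h ∈ LL, h.k = e.k ∧ h.t = f.s) ∨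
      (∃ h ∈ LL, h.k = f.k ∧ h.t = g.s) ∨ (∃ h ∈ LL, h.k = g.k ∧ h.t = e.s) := by
  decide +kernel

/-! ### The global identification relation -/

abbrev Pc (n : ℕ) : Type := Fin n × Bool × ℕ

/-- the piece of the large variable gadget used by literal `l` of clause `j` -/
def gpc {n m : ℕ} (φ : ClauseFun n m) (j : Fin m) (l : Fin 3) : Pc n :=
  ((φ j l).1, true, (gadgetIdx m j (φ j l).2 : ℕ) + 1)

def LinkRel {n m : ℕ} (φ : ClauseFun n m) : Kind → Pc n → Pc n → Prop
  | .wire t t' d, P, Q => P.1 = Q.1 ∧ P.2.1 = t ∧ Q.2.1 = t' ∧ (Q.2.2 : ℤ) = P.2.2 + d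
  | .cn, P, Q => ∃ j l, P = gpc φ j l ∧ Q = gpc φ j (l + 1)
  | .cp, P, Q => ∃ j l, Q = gpc φ j l ∧ P = gpc φ j (l + 1)

def ER {n m : ℕ} (φ : ClauseFun n m) (x y : Pc n × LV) : Prop :=
  x = y ∨ ∃ e ∈ LL, e.s = x.2 ∧ e.t = y.2 ∧ LinkRel φ e.k x.1 y.1

section
variable {n m : ℕ} {φ : ClauseFun n m}

def HD (φ : ClauseFun n m) : Prop :=
  ∀ (j : Fin m) (l l' : Fin 3), l ≠ l' → (φ j l).1 ≠ (φ j l').1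

theorem gpc_inj (hd : HD φ) {j j' : Fin m} {l l' : Fin 3}
    (h : gpc φ j l = gpc φ j' l') : j = j' ∧ l = l' := by
  simp only [gpc, gadgetIdx, Prod.mk.injEq, true_and] at h
  obtain ⟨h1, h2⟩ := h
  have hj : j = j' := by
    apply Fin.ext
    revert h2
    split <;> split <;> intro h2 <;> omega
  subst hj
  refine ⟨rfl, ?_⟩
  by_contra hne
  exact hd j l l' hne h1

theorem link_rev {k : Kind} {P Q : Pc n} (h : LinkRel φ k P Q) : LinkRel φ k.rev Q P := by
  cases k with
  | wire t t' d =>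
    obtain ⟨h1, h2, h3, h4⟩ := h
    exact ⟨h1.symm, h3, h2, by omega⟩
  | cn => exact h
  | cp => exact h

theorem link_fun (hd : HD φ) {k : Kind} {P Q R : Pc n} (h : LinkRel φ k P Q)
    (h' : LinkRel φ k P R) : Q = R := by
  cases k with
  | wire t t' d =>
    obtain ⟨h1, h2, h3, h4⟩ := h
    obtain ⟨h1', h2', h3', h4'⟩ := h'
    refine Prod.ext (h1.symm.trans h1') (Prod.ext (h3.trans h3'.symm) ?_)
    omega
  | cn =>
    obtain ⟨j, l, h1, h2⟩ := h
    obtain ⟨j', l', h1', h2'⟩ := h'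
    obtain ⟨rfl, rfl⟩ := gpc_inj hd (h1.symm.trans h1')
    exact h2.trans h2'.symm
  | cp =>
    obtain ⟨j, l, h1, h2⟩ := h
    obtain ⟨j', l', h1', h2'⟩ := h'
    obtain ⟨rfl, hl⟩ := gpc_inj hd (h2.symm.trans h2')
    have : l = l' := by simpa using hl
    subst this
    exact h1.trans h1'.symm

theorem link_comp {k k' k'' : Kind} {P Q R : Pc n} (h : LinkRel φ k P Q)
    (h' : LinkRel φ k' Q R) (hc : k.comp k' = some k'') : LinkRel φ k'' P R := by
  cases k <;> cases k' <;> simp only [Kind.comp, reduceCtorEq] at hc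
  split at hc
  · simp only [Option.some.injEq] at hc
    subst hc
    obtain ⟨h1, h2, h3, h4⟩ := h
    obtain ⟨h1', h2', h3', h4'⟩ := h'
    exact ⟨h1.trans h1', h2, h3', by omega⟩
  · simp at hc

theorem link_cn_ne (hd : HD φ) {P Q : Pc n} (h : LinkRel φ .cn P Q) : P.1 ≠ Q.1 := by
  obtain ⟨j, l, rfl, rfl⟩ := h
  exact hd j l (l + 1) (by simp)

theorem link_uniq (hd : HD φ) {k k' : Kind} {P Q : Pc n} (h : LinkRel φ k P Q)
    (h' : LinkRel φ k' P Q) : k = k' := by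
  have key : LinkRel φ .cn P Q → LinkRel φ .cp P Q → False := by
    rintro ⟨j, l, h1, h2⟩ ⟨j', l', h1', h2'⟩
    obtain ⟨rfl, rfl⟩ := gpc_inj hd (h1.symm.trans h2')
    obtain ⟨-, hl⟩ := gpc_inj hd (h2.symm.trans h1')
    have : ∀ l : Fin 3, l + 1 + 1 ≠ l := by decide
    exact this l' hl
  cases k <;> cases k'
  · obtain ⟨h1, h2, h3, h4⟩ := h
    obtain ⟨h1', h2', h3', h4'⟩ := h'
    rw [← h2, ← h2', ← h3, ← h3']
    congr 1
    omega
  · exact (link_cn_ne hd h' h.1).elim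
  · exact (link_cn_ne hd (link_rev h') h.1.symm).elim
  · exact (link_cn_ne hd h h'.1).elim
  · rfl
  · exact (key h h').elim
  · exact (link_cn_ne hd (link_rev h) h'.1.symm).elim
  · exact (key h' h).elim
  · rfl

theorem LL_noloop : ∀ e ∈ LL, e.k ≠ .wire false false 0 ∧ e.k ≠ .wire true true 0 := by
  decide +kernel

theorem link_irrefl (hd : HD φ) {e : LinkE} (he : e ∈ LL) {P : Pc n} (h : LinkRel φ e.k P P) :
    False := by
  have hh := LL_noloop e he
  cases hk : e.k with
  | wire t t' d =>
    rw [hk] at h hh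
    obtain ⟨h1, h2, h3, h4⟩ := h
    have : d = 0 := by omega
    subst this
    rw [← h2, ← h3] at hh
    rcases hb : P.2.1 with _ | _ <;> simp [hb] at hh
  | cn => rw [hk] at h; exact link_cn_ne hd h rfl
  | cp => rw [hk] at h; exact link_cn_ne hd (link_rev h) rfl

theorem ER_symm {x y : Pc n × LV} (h : ER φ x y) : ER φ y x := by
  rcases h with rfl | ⟨e, he, h1, h2, h3⟩
  · exact Or.inl rfl
  · exact Or.inr ⟨e.rev, LL_rev e he, h2, h1, link_rev h3⟩

theorem ER_trans (hd : HD φ) {x y z : Pc n × LV} (h : ER φ x y) (h' : ER φ y z) : ER φ x z := by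
  rcases h with rfl | ⟨e, he, h1, h2, h3⟩
  · exact h'
  rcases h' with rfl | ⟨f, hf, h1', h2', h3'⟩
  · exact Or.inr ⟨e, he, h1, h2, h3⟩
  rcases LL_trans e he f hf (h2.trans h1'.symm) with ⟨hk, hs⟩ | ⟨g, hg, hk, hs, ht⟩
  · left
    rw [hk] at h3'
    exact Prod.ext (link_fun hd (link_rev h3) h3') (h1.symm.trans (hs.trans h2'))
  · exact Or.inr ⟨g, hg, hs.trans h1, ht.trans h2', link_comp h3 h3' hk⟩

theorem ER_inj (hd : HD φ) {P : Pc n} {u v : LV} (h : ER φ (P, u) (P, v)) : u = v := by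
  rcases h with h | ⟨e, he, h1, h2, h3⟩
  · exact (Prod.ext_iff.1 h).2
  · exact (link_irrefl hd he h3).elim

/-- Transfer of edges. -/
theorem ER_adj (hd : HD φ) {P Q : Pc n} {u w u' w' : LV} (h : ER φ (P, u) (Q, u'))
    (h' : ER φ (P, w) (Q, w')) (ha : adjL u w) : adjL u' w' := by
  rcases h with h | ⟨e, he, h1, h2, h3⟩
  · obtain ⟨rfl, rfl⟩ := Prod.mk.injEq _ _ _ _ ▸ h
    rw [← ER_inj hd h']
    exact ha
  rcases h' with h' | ⟨f, hf, h1', h2', h3'⟩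
  · obtain ⟨rfl, rfl⟩ := Prod.mk.injEq _ _ _ _ ▸ h'
    exact (link_irrefl hd he h3).elim
  simp only at h1 h2 h1' h2'
  subst h1 h2 h1' h2'
  exact (LL_F2 e he f hf (link_uniq hd h3 h3') ha).1

/-- Transfer of triangles. -/
theorem ER_tri (hd : HD φ) {P Q : Pc n} {u w z u' w' : LV} (h : ER φ (P, u) (Q, u'))
    (h' : ER φ (P, w) (Q, w')) (ha : adjL u w) (hz : adjL u z) (hz' : adjL w z) :
    ∃ z', ER φ (P, z) (Q, z') ∧ adjL u' z' ∧ adjL w' z' := by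
  suffices hs : ∃ z', ER φ (P, z) (Q, z') by
    obtain ⟨z', hs⟩ := hs
    exact ⟨z', hs, ER_adj hd h hs hz, ER_adj hd h' hs hz'⟩
  rcases h with h | ⟨e, he, h1, h2, h3⟩
  · obtain ⟨rfl, rfl⟩ := Prod.mk.injEq _ _ _ _ ▸ h
    exact ⟨z, Or.inl rfl⟩
  rcases h' with h' | ⟨f, hf, h1', h2', h3'⟩
  · obtain ⟨rfl, rfl⟩ := Prod.mk.injEq _ _ _ _ ▸ h'
    exact (link_irrefl hd he h3).elim
  simp only at h1 h2 h1' h2'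
  subst h1 h2 h1' h2'
  obtain ⟨-, g, hg, hk, hg1, hg2⟩ := LL_F2 e he f hf (link_uniq hd h3 h3') ha
  have : z = g.s := base_uniq e.s f.s ha z hz hz' g.s hg1 hg2
  exact ⟨g.t, Or.inr ⟨g, hg, this.symm, rfl, by rw [hk]; exact h3⟩⟩

theorem nz_false {k k' k'' : Kind} {P Q R : Pc n} (h : LinkRel φ k P Q)
    (h' : LinkRel φ k' Q R) (h'' : LinkRel φ k'' R P) (hn : Kind.nz k k' k'') : False := by
  cases k <;> cases k' <;> cases k'' <;> simp only [Kind.nz] at hn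
  obtain ⟨-, -, -, h1⟩ := h
  obtain ⟨-, -, -, h2⟩ := h'
  obtain ⟨-, -, -, h3⟩ := h''
  omega

/-- Every triangle lives in a single piece. -/
theorem helly (hd : HD φ) {P Q R : Pc n} {a1 b1 b2 c2 c3 a3 : LV}
    (hab : adjL a1 b1) (hbc : adjL b2 c2) (hca : adjL c3 a3)
    (hb : ER φ (P, b1) (Q, b2)) (hc : ER φ (Q, c2) (R, c3)) (ha : ER φ (R, a3) (P, a1)) :
    ∃ (S : Pc n) (a b c : LV), ER φ (P, a1) (S, a) ∧ ER φ (P, b1) (S, b) ∧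
      ER φ (Q, c2) (S, c) := by
  have hb' := hb
  have hc' := hc
  have ha' := ha
  rcases hb with h | ⟨e, he, h1, h2, h3⟩
  · obtain ⟨rfl, rfl⟩ := Prod.mk.injEq _ _ _ _ ▸ h
    exact ⟨P, a1, b1, c2, Or.inl rfl, Or.inl rfl, Or.inl rfl⟩
  rcases hc with h | ⟨f, hf, h1', h2', h3'⟩
  · obtain ⟨rfl, rfl⟩ := Prod.mk.injEq _ _ _ _ ▸ h
    exact ⟨Q, a3, b2, c2, ER_symm ha', hb', Or.inl rfl⟩
  rcases ha with h | ⟨g, hg, h1'', h2'', h3''⟩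
  · obtain ⟨rfl, rfl⟩ := Prod.mk.injEq _ _ _ _ ▸ h
    exact ⟨R, a3, b1, c3, Or.inl rfl, Or.inl rfl, hc'⟩
  simp only at h1 h2 h1' h2' h1'' h2''
  subst h1 h2 h1' h2' h1'' h2''
  rcases LL_F3 e he f hf hbc g hg hab hca with h | ⟨h, hh, hk, ht⟩ | ⟨h, hh, hk, ht⟩ |
      ⟨h, hh, hk, ht⟩
  · exact (nz_false h3 h3' h3'' h).elim
  · refine ⟨P, g.t, e.s, h.s, Or.inl rfl, Or.inl rfl, ER_symm (Or.inr ⟨h, hh, rfl, ht, ?_⟩)⟩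
    rw [hk]; exact h3
  · refine ⟨Q, h.s, e.t, f.s, ER_trans hd (ER_symm ha') (ER_symm (Or.inr ⟨h, hh, rfl, ht, ?_⟩)),
      hb', Or.inl rfl⟩
    rw [hk]; exact h3'
  · refine ⟨R, g.s, h.s, f.t, ER_symm ha', ER_symm (Or.inr ⟨h, hh, rfl, ht, ?_⟩), hc'⟩
    rw [hk]; exact h3''

/-- Uniqueness of the third vertex, at the level of representatives. -/
theorem third (hd : HD φ) {P Q R : Pc n} {a1 b1 b2 c2 c3 a3 : LV}
    (hab : adjL a1 b1) (hbc : adjL b2 c2) (hca : adjL c3 a3)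
    (hb : ER φ (P, b1) (Q, b2)) (hc : ER φ (Q, c2) (R, c3)) (ha : ER φ (R, a3) (P, a1)) :
    ∃ z, ER φ (Q, c2) (P, z) ∧ adjL a1 z ∧ adjL b1 z := by
  obtain ⟨S, a, b, c, ha1, hb1, hc1⟩ := helly hd hab hbc hca hb hc ha
  have h1 : adjL a b := ER_adj hd ha1 hb1 hab
  have h2 : adjL b c := ER_adj hd (ER_trans hd (ER_symm hb) hb1) hc1 hbc
  have h3 : adjL c a := ER_adj hd (ER_trans hd (ER_symm hc) hc1) (ER_trans hd ha ha1) hca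
  obtain ⟨z, hz, hz1, hz2⟩ := ER_tri hd (ER_symm ha1) (ER_symm hb1) h1 (adjL_symm h3) h2
  exact ⟨z, ER_trans hd hc1 hz, hz1, hz2⟩

/-! ### Embedding of the base graph -/

def emb : Fin n × ClusterV m → Pc n × LV
  | (x, Sum.inl (i, v)) => ((x, false, i), Sum.inl v)
  | (x, Sum.inr (j, v)) => ((x, true, j + 1), Sum.inr v)

theorem clusterBase_iff (a b : ClusterV m) : (clusterBase m).Adj a b ↔
    ((∃ (i : Fin (2 * m + 1)) (x y : SunV), (sunGraph 7).Adj x y ∧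
      a = Sum.inl (i, x) ∧ b = Sum.inl (i, y)) ∨
    (∃ (j : Fin (2 * m)) (x y : BSV 12), (binarySun 12).Adj x y ∧
      a = Sum.inr (j, x) ∧ b = Sum.inr (j, y))) := by
  simp only [clusterBase, SimpleGraph.fromRel_adj]
  constructor
  · rintro ⟨-, h | h⟩
    · exact h
    · rcases h with ⟨i, x, y, h, h1, h2⟩ | ⟨i, x, y, h, h1, h2⟩
      · exact Or.inl ⟨i, y, x, h.symm, h2, h1⟩
      · exact Or.inr ⟨i, y, x, h.symm, h2, h1⟩
  · intro h
    refine ⟨?_, Or.inl h⟩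
    rcases h with ⟨i, x, y, h, rfl, rfl⟩ | ⟨i, x, y, h, rfl, rfl⟩
    · have := h.ne
      simpa using this
    · have := h.ne
      simpa using this

theorem phiBase_iff (a b : Fin n × ClusterV m) : (phiBase n m).Adj a b ↔
    (emb a).1 = (emb b).1 ∧ adjL (emb a).2 (emb b).2 := by
  have h0 : (phiBase n m).Adj a b ↔ a.1 = b.1 ∧ (clusterBase m).Adj a.2 b.2 := by
    simp only [phiBase, SimpleGraph.fromRel_adj]
    constructor
    · rintro ⟨-, h | h⟩
      · exact h
      · exact ⟨h.1.symm, h.2.symm⟩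
    · intro h
      exact ⟨fun h' => h.2.ne (by rw [h']), Or.inl h⟩
  rw [h0, clusterBase_iff]
  obtain ⟨x, (⟨i, u⟩ | ⟨i, u⟩)⟩ := a <;> obtain ⟨y, (⟨j, w⟩ | ⟨j, w⟩)⟩ := b
  · simp only [emb, adjL, nbL, sun_adj_iff, Prod.mk.injEq, List.mem_map, Sum.inl.injEq,
      exists_eq_right, true_and, reduceCtorEq, and_false, exists_false, or_false]
    constructor
    · rintro ⟨rfl, k, x', y', h, ⟨rfl, rfl⟩, rfl, rfl⟩
      exact ⟨⟨rfl, rfl⟩, h⟩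
    · rintro ⟨⟨rfl, h⟩, h'⟩
      have := Fin.ext h
      subst this
      exact ⟨rfl, i, u, w, h', ⟨rfl, rfl⟩, rfl, rfl⟩
  · simp [emb]
  · simp [emb]
  · simp only [emb, adjL, nbL, bin_adj_iff, Prod.mk.injEq, List.mem_map, Sum.inr.injEq,
      exists_eq_right, true_and, reduceCtorEq, and_false, exists_false, false_or]
    constructor
    · rintro ⟨rfl, k, x', y', h, ⟨rfl, rfl⟩, rfl, rfl⟩
      exact ⟨⟨rfl, rfl⟩, h⟩
    · rintro ⟨⟨rfl, h⟩, h'⟩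
      have : i = j := Fin.ext (by omega)
      subst this
      exact ⟨rfl, i, u, w, h', ⟨rfl, rfl⟩, rfl, rfl⟩

theorem phiBase_third {a b : Fin n × ClusterV m} (h : (phiBase n m).Adj a b) :
    ∃ c, (phiBase n m).Adj a c ∧ (phiBase n m).Adj b c := by
  simp only [phiBase_iff] at h ⊢
  obtain ⟨x, (⟨i, u⟩ | ⟨i, u⟩)⟩ := a <;> obtain ⟨y, (⟨j, w⟩ | ⟨j, w⟩)⟩ := b
  · simp only [emb, adjL, nbL, Prod.mk.injEq, List.mem_map, Sum.inl.injEq,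
      exists_eq_right, true_and] at h
    obtain ⟨⟨rfl, h⟩, h'⟩ := h
    have := Fin.ext h
    subst this
    obtain ⟨z, hz, hz'⟩ := baseS_ex u w h'
    exact ⟨(x, Sum.inl (i, z)), by simpa [emb, adjL, nbL] using ⟨hz, hz'⟩⟩
  · simp [emb] at h
  · simp [emb] at h
  · simp only [emb, adjL, nbL, Prod.mk.injEq, List.mem_map, Sum.inr.injEq,
      exists_eq_right, true_and] at h
    obtain ⟨⟨rfl, h⟩, h'⟩ := h
    have : i = j := Fin.ext (by omega)
    subst this
    obtain ⟨z, hz, hz'⟩ := baseB_ex u w h'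
    exact ⟨(x, Sum.inr (i, z)), by simpa [emb, adjL, nbL] using ⟨hz, hz'⟩⟩

theorem LF_sub : ∀ e ∈ LF, e ∈ LL := fun _ he => List.mem_append_left _ he

theorem ER_of_LF (k : Kind) (u v : LV) (he : (⟨k, u, v⟩ : LinkE) ∈ LF) {P Q : Pc n}
    (h : LinkRel φ k P Q) : ER φ (P, u) (Q, v) :=
  Or.inr ⟨_, LF_sub _ he, rfl, rfl, h⟩

theorem ER_of_phiRel {x y : Fin n × ClusterV m} (h : phiRel n m φ x y) :
    ER φ (emb x) (emb y) := by
  rcases h with ⟨i, a, b, h, rfl, rfl⟩ | ⟨j, l, h⟩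
  · rcases h with ⟨i', h⟩ | ⟨i', h⟩
    · rcases h with ⟨rfl, rfl⟩ | ⟨rfl, rfl⟩ | ⟨rfl, rfl⟩ | ⟨rfl, rfl⟩ | ⟨rfl, rfl⟩ <;>
        refine ER_of_LF (.wire false false 1) _ _ (by decide +kernel) ⟨rfl, rfl, rfl, ?_⟩ <;>
        simp
    · rcases h with ⟨rfl, rfl⟩ | ⟨rfl, rfl⟩ | ⟨rfl, rfl⟩ | ⟨rfl, rfl⟩ | ⟨rfl, rfl⟩ <;>
        refine ER_of_LF (.wire false true 0) _ _ (by decide +kernel) ⟨rfl, rfl, rfl, ?_⟩ <;>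
        simp
  · rcases h with ⟨rfl, rfl⟩ | ⟨rfl, rfl⟩ | ⟨rfl, rfl⟩ <;>
      exact ER_of_LF .cn _ _ (by decide +kernel) ⟨j, l, rfl, rfl⟩

theorem emb_inj {x y : Fin n × ClusterV m} (h : emb x = emb y) : x = y := by
  obtain ⟨x, (⟨i, u⟩ | ⟨i, u⟩)⟩ := x <;> obtain ⟨y, (⟨j, w⟩ | ⟨j, w⟩)⟩ := y <;>
    simp [emb] at h ⊢
  · exact ⟨h.1.1, Fin.ext h.1.2, h.2⟩
  · exact ⟨h.1.1, Fin.ext h.1.2, h.2⟩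

theorem ER_of_eqv (hd : HD φ) {x y : Fin n × ClusterV m}
    (h : Relation.EqvGen (phiRel n m φ) x y) : ER φ (emb x) (emb y) := by
  induction h with
  | rel x y h => exact ER_of_phiRel h
  | refl x => exact Or.inl rfl
  | symm x y _ ih => exact ER_symm ih
  | trans x y z _ _ ih ih' => exact ER_trans hd ih ih'

theorem inv_next {x y : Fin n × ClusterV m}
    (h : LinkRel φ (.wire false false 1) (emb x).1 (emb y).1) :
    ∃ (a : Fin n) (i : Fin (2 * m)) (u : _) (w : _), x = (a, Sum.inl (i.castSucc, u)) ∧ y = (a, Sum.inl (i.succ, w)) := by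
  obtain ⟨x, (⟨i, u⟩ | ⟨i, u⟩)⟩ := x <;> obtain ⟨y, (⟨j, w⟩ | ⟨j, w⟩)⟩ := y <;>
    obtain ⟨h1, h2, h3, h4⟩ := h <;> simp only [emb, reduceCtorEq] at h1 h2 h3 h4
  subst h1
  have hi : (i : ℕ) < 2 * m := by omega
  have : j = Fin.succ ⟨i, hi⟩ := Fin.ext (by simp; omega)
  exact ⟨x, ⟨i, hi⟩, u, w, rfl, by rw [this]⟩

theorem inv_hv {x y : Fin n × ClusterV m}
    (h : LinkRel φ (.wire false true 0) (emb x).1 (emb y).1) :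
    ∃ (a : Fin n) (j : Fin (2 * m)) (u : _) (w : _), x = (a, Sum.inl (j.succ, u)) ∧ y = (a, Sum.inr (j, w)) := by
  obtain ⟨x, (⟨i, u⟩ | ⟨i, u⟩)⟩ := x <;> obtain ⟨y, (⟨j, w⟩ | ⟨j, w⟩)⟩ := y <;>
    obtain ⟨h1, h2, h3, h4⟩ := h <;> simp only [emb, reduceCtorEq] at h1 h2 h3 h4
  subst h1
  refine ⟨x, j, u, w, ?_, rfl⟩
  have : i = j.succ := Fin.ext (by simp; omega)
  rw [this]

theorem inv_pw {x y : Fin n × ClusterV m}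
    (h : LinkRel φ (.wire false true 1) (emb x).1 (emb y).1) :
    ∃ (a : Fin n) (j : Fin (2 * m)) (u : _) (w : _), x = (a, Sum.inl (j.castSucc, u)) ∧ y = (a, Sum.inr (j, w)) := by
  obtain ⟨x, (⟨i, u⟩ | ⟨i, u⟩)⟩ := x <;> obtain ⟨y, (⟨j, w⟩ | ⟨j, w⟩)⟩ := y <;>
    obtain ⟨h1, h2, h3, h4⟩ := h <;> simp only [emb, reduceCtorEq] at h1 h2 h3 h4
  subst h1
  refine ⟨x, j, u, w, ?_, rfl⟩
  have : i = j.castSucc := Fin.ext (by simp; omega)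
  rw [this]

theorem inv_nv {x y : Fin n × ClusterV m}
    (h : LinkRel φ (.wire false true (-1)) (emb x).1 (emb y).1) :
    ∃ (a : Fin n) (j i : Fin (2 * m)) (u : _) (w : _), j.succ = i.castSucc ∧
      x = (a, Sum.inl (i.succ, u)) ∧ y = (a, Sum.inr (j, w)) := by
  obtain ⟨x, (⟨i, u⟩ | ⟨i, u⟩)⟩ := x <;> obtain ⟨y, (⟨j, w⟩ | ⟨j, w⟩)⟩ := y <;>
    obtain ⟨h1, h2, h3, h4⟩ := h <;> simp only [emb, reduceCtorEq] at h1 h2 h3 h4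
  subst h1
  have hj : (j : ℕ) + 1 < 2 * m := by omega
  have : i = Fin.succ ⟨j + 1, hj⟩ := Fin.ext (by simp; omega)
  exact ⟨x, j, ⟨j + 1, hj⟩, u, w, rfl, by rw [this], rfl⟩

theorem inv_cn {x y : Fin n × ClusterV m}
    (h : LinkRel φ .cn (emb x).1 (emb y).1) :
    ∃ (j : Fin m) (l : Fin 3) (u : _) (w : _),
      x = ((φ j l).1, Sum.inr (gadgetIdx m j (φ j l).2, u)) ∧
      y = ((φ j (l + 1)).1, Sum.inr (gadgetIdx m j (φ j (l + 1)).2, w)) := by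
  obtain ⟨x, (⟨i, u⟩ | ⟨i, u⟩)⟩ := x <;> obtain ⟨y, (⟨i', w⟩ | ⟨i', w⟩)⟩ := y <;>
    obtain ⟨j, l, h1, h2⟩ := h <;>
    simp only [emb, gpc, Prod.mk.injEq, reduceCtorEq, false_and, and_false, true_and] at h1 h2
  obtain ⟨rfl, h1⟩ := h1
  obtain ⟨rfl, h2⟩ := h2
  refine ⟨j, l, u, w, ?_, ?_⟩
  · have : i = gadgetIdx m j (φ j l).2 := Fin.ext (by omega)
    rw [this]
  · have : i' = gadgetIdx m j (φ j (l + 1)).2 := Fin.ext (by omega)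
    rw [this]

theorem eqv_wire {a : Fin n} {u v : ClusterV m} (h : clusterRel m u v) :
    Relation.EqvGen (phiRel n m φ) (a, u) (a, v) :=
  .rel _ _ (Or.inl ⟨a, u, v, h, rfl, rfl⟩)

theorem eqv_of_LF {x y : Fin n × ClusterV m} {e : LinkE} (he : e ∈ LF) (hs : e.s = (emb x).2)
    (ht : e.t = (emb y).2) (hl : LinkRel φ e.k (emb x).1 (emb y).1) :
    Relation.EqvGen (phiRel n m φ) x y := by
  simp only [LF, List.mem_cons, List.not_mem_nil, or_false] at he
  rcases he with rfl | rfl | rfl | rfl | rfl | rfl | rfl | rfl | rfl | rfl | rfl | rfl | rfl |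
    rfl | rfl
  iterate 5
    · obtain ⟨a, i, u, w, rfl, rfl⟩ := inv_next hl
      simp only [emb, hC, hP, Sum.inl.injEq] at hs ht
      subst hs ht
      exact eqv_wire (Or.inl ⟨i, by simp⟩)
  iterate 5
    · obtain ⟨a, i, u, w, rfl, rfl⟩ := inv_hv hl
      simp only [emb, hC, hP, bV, bX, bQ, Sum.inl.injEq, Sum.inr.injEq] at hs ht
      subst hs ht
      exact eqv_wire (Or.inr ⟨i, by simp⟩)
  · obtain ⟨a, j, i, u, w, hij, rfl, rfl⟩ := inv_nv hl
    simp only [emb, hC, hP, bV, bX, bQ, Sum.inl.injEq, Sum.inr.injEq] at hs ht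
    subst hs ht
    refine .trans _ (a, Sum.inl (i.castSucc, Sum.inl 4)) _ (.symm _ _ ?_) ?_
    · exact eqv_wire (Or.inl ⟨i, by simp⟩)
    · rw [← hij]
      exact eqv_wire (Or.inr ⟨j, by simp⟩)
  · obtain ⟨a, i, u, w, rfl, rfl⟩ := inv_pw hl
    simp only [emb, hC, hP, bV, bX, bQ, Sum.inl.injEq, Sum.inr.injEq] at hs ht
    subst hs ht
    refine .trans _ (a, Sum.inl (i.succ, Sum.inl 2)) _ ?_ ?_
    · exact eqv_wire (Or.inl ⟨i, by simp⟩)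
    · exact eqv_wire (Or.inr ⟨i, by simp⟩)
  iterate 3
    · obtain ⟨j, l, u, w, rfl, rfl⟩ := inv_cn hl
      simp only [emb, bV, bP, Sum.inr.injEq] at hs ht
      subst hs ht
      exact .rel _ _ (Or.inr ⟨j, l, by simp⟩)

theorem eqv_of_ER {x y : Fin n × ClusterV m} (h : ER φ (emb x) (emb y)) :
    Relation.EqvGen (phiRel n m φ) x y := by
  rcases h with h | ⟨e, he, h1, h2, h3⟩
  · rw [emb_inj h]
    exact .refl _
  rcases List.mem_append.1 he with he | he
  · exact eqv_of_LF he h1 h2 h3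
  · obtain ⟨f, hf, rfl⟩ := List.mem_map.1 he
    refine .symm _ _ (eqv_of_LF hf h2 h1 ?_)
    have hr : f.rev.k.rev = f.k := by
      cases f with
      | mk k s t => cases k <;> simp [LinkE.rev, Kind.rev]
    rw [← hr]
    exact link_rev h3

theorem mk_eq_iff (hd : HD φ) {x y : Fin n × ClusterV m} :
    (Quotient.mk (Relation.EqvGen.setoid (phiRel n m φ)) x = Quotient.mk _ y) ↔
      ER φ (emb x) (emb y) :=
  ⟨fun h => ER_of_eqv hd (Quotient.exact h), fun h => Quotient.sound (eqv_of_ER h)⟩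

theorem Gphi_adj (hd : HD φ) {X Y} : (Gphi n m φ).Adj X Y ↔
    ∃ a b, (phiBase n m).Adj a b ∧ X = Quotient.mk _ a ∧ Y = Quotient.mk _ b := by
  simp only [Gphi, Glue, SimpleGraph.fromRel_adj]
  constructor
  · rintro ⟨-, h | ⟨a, b, h, h1, h2⟩⟩
    · exact h
    · exact ⟨b, a, h.symm, h2, h1⟩
  · rintro ⟨a, b, h, rfl, rfl⟩
    refine ⟨?_, Or.inl ⟨a, b, h, rfl, rfl⟩⟩
    intro h'
    rw [mk_eq_iff hd] at h'
    rw [phiBase_iff] at h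
    rcases ha : emb a with ⟨P, u⟩
    rcases hb : emb b with ⟨Q, w⟩
    rw [ha, hb] at h h'
    obtain ⟨rfl, h2⟩ := h
    have := ER_inj hd h'
    subst this
    exact adjL_ne_aux _ h2

theorem third_rep (hd : HD φ) {a b : Fin n × ClusterV m} (hab : (phiBase n m).Adj a b)
    {Z : Quotient (Relation.EqvGen.setoid (phiRel n m φ))}
    (h1 : (Gphi n m φ).Adj (Quotient.mk _ a) Z) (h2 : (Gphi n m φ).Adj (Quotient.mk _ b) Z) :
    ∃ (c : Fin n × ClusterV m) (z : LV), Z = Quotient.mk _ c ∧ ER φ (emb c) ((emb a).1, z) ∧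
      adjL (emb a).2 z ∧ adjL (emb b).2 z := by
  rw [Gphi_adj hd] at h1 h2
  obtain ⟨a3, c3, h1, e1, rfl⟩ := h1
  obtain ⟨b2, c2, h2, e2, e3⟩ := h2
  rw [mk_eq_iff hd] at e1 e2
  have e3' := e3
  rw [mk_eq_iff hd] at e3'
  rw [phiBase_iff] at hab h1 h2
  refine ⟨c2, ?_⟩
  rcases ha : emb a with ⟨P, u1⟩
  rcases hb : emb b with ⟨P', u2⟩
  rcases hb2 : emb b2 with ⟨Q, u3⟩
  rcases hc2 : emb c2 with ⟨Q', u4⟩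
  rcases hc3 : emb c3 with ⟨R, u5⟩
  rcases ha3 : emb a3 with ⟨R', u6⟩
  simp only [ha, hb, hb2, hc2, hc3, ha3] at hab h1 h2 e1 e2 e3'
  obtain ⟨rfl, hab⟩ := hab
  obtain ⟨rfl, h1⟩ := h1
  obtain ⟨rfl, h2⟩ := h2
  obtain ⟨z, hz, hz1, hz2⟩ := third hd hab h2 (adjL_symm h1) e2 (ER_symm e3') (ER_symm e1)
  exact ⟨z, e3, hz, hz1, hz2⟩

end

/-- Every edge of `G_φ` lies in exactly one triangle of `G_φ`. -/
theorem Gphi_edges_in_unique_triangle (n m : ℕ) (φ : ClauseFun n m)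
    (hdist : ∀ (j : Fin m) (l l' : Fin 3), l ≠ l' → (φ j l).1 ≠ (φ j l').1) :
    ∀ a b, (Gphi n m φ).Adj a b →
      ∃! c, (Gphi n m φ).Adj a c ∧ (Gphi n m φ).Adj b c := by
  have hd : HD φ := hdist
  intro X Y hXY
  rw [Gphi_adj hd] at hXY
  obtain ⟨a, b, hab, rfl, rfl⟩ := hXY
  obtain ⟨c, hac, hbc⟩ := phiBase_third hab
  refine ⟨Quotient.mk _ c, ⟨(Gphi_adj hd).2 ⟨a, c, hac, rfl, rfl⟩,
    (Gphi_adj hd).2 ⟨b, c, hbc, rfl, rfl⟩⟩, ?_⟩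
  rintro Z ⟨h1, h2⟩
  obtain ⟨d, z, rfl, hz, hz1, hz2⟩ := third_rep hd hab h1 h2
  rw [phiBase_iff] at hab hac hbc
  have hzc : z = (emb c).2 := base_uniq _ _ hab.2 z hz1 hz2 _ hac.2 hbc.2
  rw [mk_eq_iff hd]
  rw [hzc, hac.1] at hz
  exact hz
end
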